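/- Let d ≥ 2, let Σ ⊂ GL_d(ℝ) be a compact subset, and let μ₀ be a Borel probability measure supported in Σ which is quasi-irreducible and satisfies L_1(μ₀) > L_2(μ₀). Then (1/n) ∫ log‖gv‖ dμ₀^{*n}(g) converges to L_1(μ₀) uniformly over unit vectors: sup_{v ∈ ℝ^d, ‖v‖=1} | (1/n) ∫ log‖gv‖ dμ₀^{*n}(g) − L_1(μ₀) | → 0 as n → ∞. -/

import Mathlib

open MeasureTheory Filter
open scoped LinearAlgebra.Projectivization

noncomputable section

abbrev GLd (d : ℕ) := GL (Fin d) ℝ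
abbrev Ed (d : ℕ) := EuclideanSpace ℝ (Fin d)
abbrev Pd (d : ℕ) := ℙ ℝ (Ed d)

variable {d : ℕ}

instance : MeasurableSpace (GLd d) := borel _
instance : BorelSpace (GLd d) := ⟨rfl⟩

instance : TopologicalSpace (Pd d) :=
  (instTopologicalSpaceQuotient : TopologicalSpace (Quotient (projectivizationSetoid ℝ (Ed d))))
instance : MeasurableSpace (Pd d) := borel _
instance : BorelSpace (Pd d) := ⟨rfl⟩

/-- The continuous linear map on Euclidean space induced by `g ∈ GL_d(ℝ)`. -/
def glCLM (g : GLd d) : Ed d →L[ℝ] Ed d :=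
  Matrix.toEuclideanCLM (𝕜 := ℝ) (g : Matrix (Fin d) (Fin d) ℝ)

/-- The operator norm of `g ∈ GL_d(ℝ)`. -/
def gnorm (g : GLd d) : ℝ := ‖glCLM g‖

lemma glCLM_leftInv (g : GLd d) (v : Ed d) : glCLM g⁻¹ (glCLM g v) = v := by
  have h : glCLM (d := d) g⁻¹ * glCLM g = 1 := by
    rw [glCLM, glCLM, ← map_mul]
    norm_cast
    rw [inv_mul_cancel g]
    exact map_one _
  calc glCLM g⁻¹ (glCLM g v) = (glCLM g⁻¹ * glCLM g) v := rfl
    _ = v := by rw [h]; rfl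

lemma glLinear_injective (g : GLd d) : Function.Injective (glCLM g).toLinearMap :=
  Function.LeftInverse.injective (g := (glCLM g⁻¹)) (fun v => glCLM_leftInv g v)

/-- The projective action of `g ∈ GL_d(ℝ)` on `ℙ(ℝ^d)`. -/
def pact (g : GLd d) : Pd d → Pd d :=
  Projectivization.map (glCLM g).toLinearMap (glLinear_injective g)

/-- The projective distance `δ` on `ℙ(ℝ^d)`, computed on representatives. -/
def pdelta (x y : Pd d) : ℝ :=
  Real.sqrt (‖x.rep‖ ^ 2 * ‖y.rep‖ ^ 2 - (inner ℝ x.rep y.rep : ℝ) ^ 2) /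
    (‖x.rep‖ * ‖y.rep‖)

/-- Convolution of two measures on `GL_d(ℝ)`. -/
def mconv (μ ν : Measure (GLd d)) : Measure (GLd d) :=
  (μ.prod ν).map (fun p => p.1 * p.2)

/-- `n`-fold convolution power of a measure on `GL_d(ℝ)`. -/
def mconvN (μ : Measure (GLd d)) : ℕ → Measure (GLd d)
  | 0 => Measure.dirac 1
  | n + 1 => if n = 0 then μ else mconv (mconvN μ n) μ

/-- The top Lyapunov exponent of a (compactly supported) measure on `GL_d(ℝ)`. -/
def L1 (μ : Measure (GLd d)) : ℝ :=
  limUnder atTop (fun n : ℕ => (n : ℝ)⁻¹ * ∫ g, Real.log (gnorm g) ∂(mconvN μ n))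

/-- `N₂ g = s₁(g)s₂(g)`, the product of the two largest singular values. -/
def N2 (g : GLd d) : ℝ :=
  sSup { x | ∃ p q : Ed d, ‖p‖ = 1 ∧ ‖q‖ = 1 ∧ (inner ℝ p q : ℝ) = 0 ∧
    x = Real.sqrt (‖glCLM g p‖ ^ 2 * ‖glCLM g q‖ ^ 2 -
      (inner ℝ (glCLM g p) (glCLM g q) : ℝ) ^ 2) }

/-- `L₁(μ) + L₂(μ)`. -/
def L12 (μ : Measure (GLd d)) : ℝ :=
  limUnder atTop (fun n : ℕ => (n : ℝ)⁻¹ * ∫ g, Real.log (N2 g) ∂(mconvN μ n))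

/-- The second Lyapunov exponent. -/
def L2 (μ : Measure (GLd d)) : ℝ := L12 μ - L1 μ

/-- The top Lyapunov exponent of the restriction of `μ` to an (invariant) subspace `V`. -/
def L1rest (μ : Measure (GLd d)) (V : Submodule ℝ (Ed d)) : ℝ :=
  limUnder atTop (fun n : ℕ => (n : ℝ)⁻¹ *
    ∫ g, Real.log ‖LinearMap.toContinuousLinearMap ((glCLM g).toLinearMap.domRestrict V)‖
      ∂(mconvN μ n))

/-- Quasi-irreducibility of a measure on `GL_d(ℝ)`. -/
def QuasiIrreducible (μ : Measure (GLd d)) : Prop :=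
  ¬ ∃ V : Submodule ℝ (Ed d), V ≠ ⊥ ∧ V ≠ ⊤ ∧
    (∀ᵐ g ∂μ, V.map (glCLM g).toLinearMap = V) ∧ L1rest μ V < L1 μ

/-- Irreducibility of a measure on `GL_d(ℝ)`. -/
def Irred (μ : Measure (GLd d)) : Prop :=
  ¬ ∃ V : Submodule ℝ (Ed d), V ≠ ⊥ ∧ V ≠ ⊤ ∧
    (∀ᵐ g ∂μ, V.map (glCLM g).toLinearMap = V)

/-- The Markov operator associated with a measure on `GL_d(ℝ)`. -/
def Qop (μ : Measure (GLd d)) (φ : Pd d → ℝ) : Pd d → ℝ :=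
  fun v => ∫ g, φ (pact g v) ∂μ

/-- The average `α`-Hölder constant of a measure on `GL_d(ℝ)`. -/
def kalpha (α : ℝ) (μ : Measure (GLd d)) : ℝ :=
  sSup { x | ∃ v₁ v₂ : Pd d, v₁ ≠ v₂ ∧
    x = ∫ g, (pdelta (pact g v₁) (pact g v₂) / pdelta v₁ v₂) ^ α ∂μ }

/-- The `α`-Hölder seminorm of an observable on `ℙ(ℝ^d)`. -/
def valpha (α : ℝ) (φ : Pd d → ℝ) : ℝ :=
  sSup { x | ∃ v₁ v₂ : Pd d, v₁ ≠ v₂ ∧ x = |φ v₁ - φ v₂| / pdelta v₁ v₂ ^ α }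

/-- `φ` is `α`-Hölder: `v_α(φ) < ∞`. -/
def IsHolder (α : ℝ) (φ : Pd d → ℝ) : Prop :=
  BddAbove { x | ∃ v₁ v₂ : Pd d, v₁ ≠ v₂ ∧ x = |φ v₁ - φ v₂| / pdelta v₁ v₂ ^ α }

/-- The total variation distance between two finite measures. -/
def tvDist (μ ν : Measure (GLd d)) [IsFiniteMeasure μ] [IsFiniteMeasure ν] : ℝ :=
  ((μ.toSignedMeasure - ν.toSignedMeasure).totalVariation Set.univ).toReal

/-- A measure is compactly supported. -/
def CompactlySupported (μ : Measure (GLd d)) : Prop :=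
  ∃ K : Set (GLd d), IsCompact K ∧ μ Kᶜ = 0

/-- `S` is the (topological) support of `μ`. -/
def IsSupport (μ : Measure (GLd d)) (S : Set (GLd d)) : Prop :=
  μ Sᶜ = 0 ∧ ∀ x ∈ S, ∀ U : Set (GLd d), IsOpen U → x ∈ U → 0 < μ U

/-- A measure `η` on `ℙ(ℝ^d)` is `μ`-stationary. -/
def Stationary (μ : Measure (GLd d)) (η : Measure (Pd d)) : Prop :=
  ∀ φ : Pd d → ℝ, Continuous φ → (∃ C, ∀ v, |φ v| ≤ C) →
    ∫ v, φ v ∂η = ∫ g, ∫ v, φ (pact g v) ∂η ∂μ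

/-!
Let `σ(g, ℝv) = log (‖gv‖ / ‖v‖)` be the norm cocycle on projective space. The minimum over lines
of its expected growth along `n` steps is superadditive in `n`, hence grows at a linear rate `β`,
and everything reduces to `L₁ ≤ β`. Second moments show that, uniformly in the starting line, the
expected shortfall of `σ(g, x) / n` below `β` is small for suitable `n`. Averaging over the orbit
of an almost minimizing line (a discrete substitute for a stationary measure) and using
compactness, one finds a line `x` and sparse times `n k` along which the expected excess over `β`
is summable. The vectors with this property form a subspace `V`, invariant under almost every `g`
because a shift by one step costs only `O(1 / n k)`, and the norm of `g` on `V` grows at rate at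
most `β`. Quasi-irreducibility then gives `L₁ ≤ L₁(V) ≤ β`.
-/

section ConvolutionPowers

variable {G : Type*} [Monoid G] [MeasurableSpace G] {μ ν : Measure G}

/-- The multiplicative convolution power `μ^{*n}` of a measure on a monoid, with
`μ^{*0} = δ₁`. -/
def convPow (μ : Measure G) : ℕ → Measure G
  | 0 => Measure.dirac 1
  | n + 1 => (convPow μ n).mconv μ

variable [MeasurableMul₂ G]

instance [IsProbabilityMeasure μ] (n : ℕ) : IsProbabilityMeasure (convPow μ n) := by
  induction n with
  | zero => exact inferInstanceAs (IsProbabilityMeasure (Measure.dirac 1))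
  | succ n ih => exact Measure.probabilitymeasure_of_probabilitymeasures_mconv _ _

lemma convPow_add [IsProbabilityMeasure μ] (m n : ℕ) :
    convPow μ (m + n) = (convPow μ m).mconv (convPow μ n) := by
  induction n with
  | zero => exact (Measure.mconv_dirac_one _).symm
  | succ n ih => rw [← add_assoc, convPow, ih, Measure.mconv_assoc, convPow]

lemma convPow_one [IsProbabilityMeasure μ] : convPow μ 1 = μ := by
  rw [convPow, convPow, Measure.dirac_one_mconv]

lemma convPow_succ' [IsProbabilityMeasure μ] (n : ℕ) :
    convPow μ (n + 1) = μ.mconv (convPow μ n) := by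
  rw [add_comm, convPow_add, convPow_one]

lemma convPow_mul [IsProbabilityMeasure μ] (m q : ℕ) :
    convPow μ (m * q) = convPow (convPow μ m) q := by
  induction q with
  | zero => rfl
  | succ q ih => rw [mul_add_one, convPow_add, ih, convPow]

lemma ae_convPow [IsProbabilityMeasure μ] {p : G → Prop} (hp : MeasurableSet {g | p g})
    (hone : p 1) (hmul : ∀ g h, p g → p h → p (g * h)) (h : ∀ᵐ g ∂μ, p g) (n : ℕ) :
    ∀ᵐ g ∂convPow μ n, p g := by
  induction n with
  | zero => exact (ae_dirac_iff hp).mpr hone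
  | succ n ih =>
    rw [convPow, Measure.mconv, ae_map_iff measurable_mul.aemeasurable hp]
    filter_upwards [Measure.quasiMeasurePreserving_fst.ae ih,
      Measure.quasiMeasurePreserving_snd.ae h] with q hq₁ hq₂ using hmul _ _ hq₁ hq₂

lemma integrable_prod_of_integrable_mconv {f : G → ℝ} (hf : Integrable f (μ.mconv ν)) :
    Integrable (fun p : G × G => f (p.1 * p.2)) (μ.prod ν) :=
  (integrable_map_measure hf.1 measurable_mul.aemeasurable).mp hf

lemma integral_mconv_eq_integral_right [SFinite μ] [SFinite ν] {f : G → ℝ}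
    (hf : Integrable f (μ.mconv ν)) :
    ∫ g, f g ∂μ.mconv ν = ∫ h, ∫ g, f (g * h) ∂μ ∂ν := by
  rw [Measure.mconv, integral_map measurable_mul.aemeasurable hf.1,
    integral_prod_symm _ (integrable_prod_of_integrable_mconv hf)]

lemma integral_mconv_le_add [IsProbabilityMeasure μ] [IsProbabilityMeasure ν] {f : G → ℝ}
    (hμ : Integrable f μ) (hν : Integrable f ν) (hμν : Integrable f (μ.mconv ν))
    (hsub : ∀ᵐ h ∂ν, ∀ g, f (g * h) ≤ f g + f h) :
    ∫ g, f g ∂μ.mconv ν ≤ ∫ g, f g ∂μ + ∫ h, f h ∂ν := by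
  have hprod : ∀ᵐ p ∂μ.prod ν, f (p.1 * p.2) ≤ f p.1 + f p.2 := by
    filter_upwards [Measure.quasiMeasurePreserving_snd.ae hsub] with p hp using hp p.1
  calc ∫ g, f g ∂μ.mconv ν = ∫ p : G × G, f (p.1 * p.2) ∂μ.prod ν :=
        integral_map measurable_mul.aemeasurable hμν.1
    _ ≤ ∫ p : G × G, (f p.1 + f p.2) ∂μ.prod ν :=
        integral_mono_ae (integrable_prod_of_integrable_mconv hμν)
          ((hμ.comp_fst ν).add (hν.comp_snd μ)) hprod
    _ = ∫ g, f g ∂μ + ∫ h, f h ∂ν := by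
        rw [integral_add (hμ.comp_fst ν) (hν.comp_snd μ), integral_fun_fst, integral_fun_snd]
        simp

lemma subadditive_integral_convPow [IsProbabilityMeasure μ] {f : G → ℝ}
    (hf : ∀ n, Integrable f (convPow μ n))
    (hsub : ∀ n, ∀ᵐ h ∂convPow μ n, ∀ g, f (g * h) ≤ f g + f h) :
    Subadditive fun n => ∫ g, f g ∂convPow μ n := fun m n => by
  simpa only [convPow_add] using
    integral_mconv_le_add (hf m) (hf n) (convPow_add (μ := μ) m n ▸ hf (m + n)) (hsub n)

end ConvolutionPowers

section Cocycles

lemma sq_max_add_zero_le (s t : ℝ) :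
    max (s + t) 0 ^ 2 ≤ max s 0 ^ 2 + 2 * max s 0 * t + t ^ 2 := by
  rcases le_total s 0 with hs | hs <;> rcases le_total (s + t) 0 with hst | hst <;>
    simp only [hs, hst, max_eq_left, max_eq_right] <;> nlinarith [sq_nonneg (s + t)]

lemma max_sub_div_le {a β ε N : ℝ} (hε : 0 < ε) (hN : 0 < N) (ha : N * (β - ε) ≤ a) (s : ℝ) :
    max (β - s / N) 0 ≤ 2 * ε + max (a - s) 0 ^ 2 / (4 * ε * N ^ 2) := by
  set u := max (a - s) 0
  have hdeficit : β - s / N ≤ ε + u / N := by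
    have hle : N * (β - ε) - s ≤ u := (sub_le_sub_right ha s).trans (le_max_left _ _)
    have hdiv := div_le_div_of_nonneg_right hle hN.le
    rw [sub_div, mul_div_cancel_left₀ _ hN.ne'] at hdiv
    linarith
  have hamgm : u / N ≤ ε + u ^ 2 / (4 * ε * N ^ 2) := by
    have hsq : ε + u ^ 2 / (4 * ε * N ^ 2) - u / N = (2 * ε - u / N) ^ 2 / (4 * ε) := by
      field_simp
      ring
    rw [← sub_nonneg, hsq]
    positivity
  exact max_le (by linarith) (by positivity)

lemma le_add_mul_of_abs_sub_le {φ : ℝ → ℝ} {L : NNReal} (hφ : LipschitzWith L φ) {s t c : ℝ}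
    (hst : |s - t| ≤ c) : φ s ≤ φ t + L * c := by
  have hdist := (le_abs_self _).trans (hφ.dist_le_mul s t)
  rw [Real.dist_eq] at hdist
  linarith [mul_le_mul_of_nonneg_left hst L.coe_nonneg]

lemma ae_summable_of_summable_integral {α : Type*} [MeasurableSpace α] {ν : Measure α}
    {f : ℕ → α → ℝ} (hint : ∀ k, Integrable (f k) ν) (hnonneg : ∀ k a, 0 ≤ f k a)
    (hsum : Summable fun k => ∫ a, f k a ∂ν) : ∀ᵐ a ∂ν, Summable fun k => f k a := by
  have hL1 (k : ℕ) : eLpNorm (f k) 1 ν = ENNReal.ofReal (∫ a, f k a ∂ν) := by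
    rw [eLpNorm_one_eq_lintegral_enorm, ← ofReal_integral_norm_eq_lintegral_enorm (hint k)]
    simp_rw [Real.norm_of_nonneg (hnonneg k _)]
  have hfinite : ∑' k, eLpNorm (f k) 1 ν ≠ ⊤ := by
    simp_rw [hL1]
    exact hsum.tsum_ofReal_ne_top
  filter_upwards [summable_norm_of_tsum_eLpNorm_ne_top le_rfl (fun k => (hint k).1) hfinite]
    with a ha using ha.of_norm

lemma exists_norm_le_of_abs_le {φ : ℝ → ℝ} (hφ : Continuous φ) (C : ℝ) :
    ∃ B, ∀ t, |t| ≤ C → ‖φ t‖ ≤ B := by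
  obtain ⟨B, hB⟩ := (isCompact_Icc (a := -C) (b := C)).exists_bound_of_continuousOn
    hφ.continuousOn
  exact ⟨B, fun t ht => hB t (abs_le.mp ht)⟩

variable {G X : Type*} [Monoid G] [MeasurableSpace G] [MulAction G X]

/-- An additive cocycle `σ(gh, x) = σ(g, hx) + σ(h, x)` over a monoid action which is bounded
by `C` in absolute value for `μ`-almost every `g`. Only measurability in `g` is required. -/
structure IsBoundedCocycle (μ : Measure G) (C : ℝ) (σ : G → X → ℝ) : Prop where
  map_mul (g h : G) (x : X) : σ (g * h) x = σ g (h • x) + σ h x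
  measurable (x : X) : Measurable fun g => σ g x
  ae_abs_le (x : X) : ∀ᵐ g ∂μ, |σ g x| ≤ C

namespace IsBoundedCocycle

variable {μ ν : Measure G} {C D : ℝ} {σ : G → X → ℝ}

protected lemma one (hσ : IsBoundedCocycle μ C σ) (x : X) : σ 1 x = 0 := by
  have h := hσ.map_mul 1 1 x
  rw [one_mul, one_smul] at h
  linarith

protected lemma nonneg [NeZero μ] (hσ : IsBoundedCocycle μ C σ) (x : X) : 0 ≤ C := by
  obtain ⟨g, hg⟩ := (hσ.ae_abs_le x).exists
  exact (abs_nonneg _).trans hg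

lemma integrable_comp [IsFiniteMeasure μ] (hσ : IsBoundedCocycle μ C σ) {φ : ℝ → ℝ}
    (hφ : Continuous φ) (x : X) : Integrable (fun g => φ (σ g x)) μ := by
  obtain ⟨B, hB⟩ := exists_norm_le_of_abs_le hφ C
  refine .of_bound (hφ.measurable.comp (hσ.measurable x)).aestronglyMeasurable B ?_
  filter_upwards [hσ.ae_abs_le x] with g hg using hB _ hg

protected lemma integrable [IsFiniteMeasure μ] (hσ : IsBoundedCocycle μ C σ) (x : X) :
    Integrable (fun g => σ g x) μ :=
  hσ.integrable_comp continuous_id x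

lemma abs_integral_le [IsProbabilityMeasure μ] (hσ : IsBoundedCocycle μ C σ) (x : X) :
    |∫ g, σ g x ∂μ| ≤ C := by
  simpa using norm_integral_le_of_norm_le_const (f := fun g => σ g x) (hσ.ae_abs_le x)

lemma continuous_integral_comp [IsFiniteMeasure μ] [TopologicalSpace X]
    [FirstCountableTopology X] (hσ : IsBoundedCocycle μ C σ) (hcont : ∀ g, Continuous (σ g))
    {φ : ℝ → ℝ} (hφ : Continuous φ) : Continuous fun x => ∫ g, φ (σ g x) ∂μ := by
  obtain ⟨B, hB⟩ := exists_norm_le_of_abs_le hφ C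
  refine continuous_of_dominated (bound := fun _ => B)
    (fun x => (hσ.integrable_comp hφ x).aestronglyMeasurable) (fun x => ?_)
    (integrable_const B) (.of_forall fun g => hφ.comp (hcont g))
  filter_upwards [hσ.ae_abs_le x] with g hg using hB _ hg

lemma integral_sq_centered_le [IsProbabilityMeasure μ] (hσ : IsBoundedCocycle μ C σ) (x : X) :
    ∫ g, (∫ g', σ g' x ∂μ - σ g x) ^ 2 ∂μ ≤ C ^ 2 := by
  have hvar := ProbabilityTheory.variance_le_sq_of_bounded (μ := μ) (a := -C) (b := C)
    (X := fun g => σ g x) (by filter_upwards [hσ.ae_abs_le x] with g hg using abs_le.mp hg)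
    (hσ.measurable x).aemeasurable
  rw [ProbabilityTheory.variance_eq_integral (hσ.measurable x).aemeasurable] at hvar
  simp_rw [sub_sq_comm (∫ g', σ g' x ∂μ)]
  linarith

lemma integral_sq_shortfall_le [IsProbabilityMeasure μ] (hσ : IsBoundedCocycle μ C σ)
    {a : ℝ} {x : X} (ha : a ≤ ∫ g, σ g x ∂μ) (s : ℝ) :
    ∫ g, max (s + (a - σ g x)) 0 ^ 2 ∂μ ≤ max s 0 ^ 2 + C ^ 2 := by
  set F := ∫ g, σ g x ∂μ
  have hdev : Integrable (fun g => 2 * max s 0 * (F - σ g x)) μ :=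
    hσ.integrable_comp (φ := fun t => 2 * max s 0 * (F - t)) (by fun_prop) x
  have hlin : Integrable (fun g => max s 0 ^ 2 + 2 * max s 0 * (F - σ g x)) μ :=
    (integrable_const _).add hdev
  have hsq : Integrable (fun g => (F - σ g x) ^ 2) μ :=
    hσ.integrable_comp (φ := fun t => (F - t) ^ 2) (by fun_prop) x
  calc ∫ g, max (s + (a - σ g x)) 0 ^ 2 ∂μ
      ≤ ∫ g, (max s 0 ^ 2 + 2 * max s 0 * (F - σ g x) + (F - σ g x) ^ 2) ∂μ := by
        refine integral_mono
          (hσ.integrable_comp (φ := fun t => max (s + (a - t)) 0 ^ 2) (by fun_prop) x)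
          (hlin.add hsq) fun g => (?_ : _ ≤ _).trans (sq_max_add_zero_le s (F - σ g x))
        dsimp only
        gcongr
    _ = max s 0 ^ 2 + ∫ g, (F - σ g x) ^ 2 ∂μ := by
        have hcentered : ∫ g, (F - σ g x) ∂μ = 0 := by
          rw [integral_sub (integrable_const F) (hσ.integrable x)]
          simp [F]
        rw [integral_add hlin hsq, integral_add (integrable_const _) hdev, integral_const_mul,
          hcentered]
        simp
    _ ≤ max s 0 ^ 2 + C ^ 2 := by gcongr; exact hσ.integral_sq_centered_le x

variable [MeasurableMul₂ G]

lemma measurable_smul (hσ : IsBoundedCocycle μ C σ) (x : X) :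
    Measurable fun p : G × G => σ p.1 (p.2 • x) := by
  have h : (fun p : G × G => σ p.1 (p.2 • x)) = fun p => σ (p.1 * p.2) x - σ p.2 x := by
    funext p
    rw [hσ.map_mul, add_sub_cancel_right]
  rw [h]
  exact ((hσ.measurable x).comp measurable_mul).sub ((hσ.measurable x).comp measurable_snd)

lemma ae_abs_smul_le [SFinite μ] [SFinite ν] (hσ : IsBoundedCocycle μ C σ) (x : X) :
    ∀ᵐ p ∂μ.prod ν, |σ p.1 (p.2 • x)| ≤ C := by
  have hmeas : MeasurableSet {p : G × G | |σ p.1 (p.2 • x)| ≤ C} :=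
    measurableSet_le (hσ.measurable_smul x).abs measurable_const
  rw [← Measure.prod_swap, ae_map_iff measurable_swap.aemeasurable hmeas]
  exact (Measure.ae_prod_iff_ae_ae (measurable_swap hmeas)).mpr
    (.of_forall fun h => hσ.ae_abs_le (h • x))

lemma integrable_integral_comp_smul [IsFiniteMeasure μ] [IsFiniteMeasure ν]
    (hσ : IsBoundedCocycle μ C σ) {φ : ℝ → ℝ} (hφ : Continuous φ) (x : X) :
    Integrable (fun h => ∫ g, φ (σ g (h • x)) ∂μ) ν := by
  obtain ⟨B, hB⟩ := exists_norm_le_of_abs_le hφ C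
  have hint : Integrable (fun p : G × G => φ (σ p.1 (p.2 • x))) (μ.prod ν) := by
    refine .of_bound (hφ.measurable.comp (hσ.measurable_smul x)).aestronglyMeasurable B ?_
    filter_upwards [hσ.ae_abs_smul_le x] with p hp using hB _ hp
  exact hint.integral_prod_right

lemma integrable_integral_smul [IsFiniteMeasure μ] [IsFiniteMeasure ν]
    (hσ : IsBoundedCocycle μ C σ) (x : X) : Integrable (fun h => ∫ g, σ g (h • x) ∂μ) ν :=
  hσ.integrable_integral_comp_smul continuous_id x

protected lemma mconv [SFinite μ] [SFinite ν] (hμ : IsBoundedCocycle μ C σ)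
    (hν : IsBoundedCocycle ν D σ) : IsBoundedCocycle (μ.mconv ν) (C + D) σ where
  map_mul := hμ.map_mul
  measurable := hμ.measurable
  ae_abs_le x := by
    rw [Measure.mconv, ae_map_iff measurable_mul.aemeasurable
      (measurableSet_le (hμ.measurable x).abs measurable_const)]
    filter_upwards [hμ.ae_abs_smul_le x, Measure.quasiMeasurePreserving_snd.ae (hν.ae_abs_le x)]
      with p h₁ h₂
    rw [hμ.map_mul]
    exact (abs_add_le _ _).trans (add_le_add h₁ h₂)

protected lemma convPow [IsProbabilityMeasure μ] (hσ : IsBoundedCocycle μ C σ) (n : ℕ) :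
    IsBoundedCocycle (convPow μ n) (n * C) σ := by
  induction n with
  | zero =>
    refine ⟨hσ.map_mul, hσ.measurable, fun x => ?_⟩
    have hset := measurableSet_le (hσ.measurable x).abs (measurable_const (a := ((0 : ℕ) : ℝ) * C))
    rw [convPow, ae_dirac_iff hset]
    simp [hσ.one]
  | succ n ih =>
    rw [Nat.cast_succ, add_one_mul]
    exact ih.mconv hσ

lemma integrable_integral_comp_smul_add [IsFiniteMeasure μ] [IsFiniteMeasure ν]
    (hμ : IsBoundedCocycle μ C σ) (hν : IsBoundedCocycle ν D σ) {φ : ℝ → ℝ}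
    (hφ : Continuous φ) (x : X) :
    Integrable (fun h => ∫ g, φ (σ g (h • x) + σ h x) ∂μ) ν := by
  simpa only [hμ.map_mul] using (integrable_prod_of_integrable_mconv
    ((hμ.mconv hν).integrable_comp hφ x)).integral_prod_right

lemma integral_comp_mconv [IsFiniteMeasure μ] [IsFiniteMeasure ν]
    (hμ : IsBoundedCocycle μ C σ) (hν : IsBoundedCocycle ν D σ) {φ : ℝ → ℝ}
    (hφ : Continuous φ) (x : X) :
    ∫ g, φ (σ g x) ∂μ.mconv ν = ∫ h, ∫ g, φ (σ g (h • x) + σ h x) ∂μ ∂ν := by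
  simp_rw [integral_mconv_eq_integral_right ((hμ.mconv hν).integrable_comp hφ x), hμ.map_mul]

protected lemma integral_mconv [IsProbabilityMeasure μ] [IsProbabilityMeasure ν]
    (hμ : IsBoundedCocycle μ C σ) (hν : IsBoundedCocycle ν D σ) (x : X) :
    ∫ g, σ g x ∂μ.mconv ν = ∫ g, σ g x ∂ν + ∫ h, ∫ g, σ g (h • x) ∂μ ∂ν := by
  have hsplit (h : G) : ∫ g, (σ g (h • x) + σ h x) ∂μ = ∫ g, σ g (h • x) ∂μ + σ h x := by
    rw [integral_add (hμ.integrable _) (integrable_const _)]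
    simp
  refine (hμ.integral_comp_mconv hν continuous_id x).trans ?_
  simp only [id, hsplit]
  rw [integral_add (hμ.integrable_integral_smul x) (hν.integrable x), add_comm]

lemma integral_comp_smul_le [IsProbabilityMeasure μ] [IsProbabilityMeasure ν]
    (hμ : IsBoundedCocycle μ C σ) (hν : IsBoundedCocycle ν D σ) {φ : ℝ → ℝ} {L : NNReal}
    (hφ : LipschitzWith L φ) (x : X) :
    ∫ h, ∫ g, φ (σ g (h • x)) ∂μ ∂ν ≤ ∫ g, φ (σ g x) ∂μ.mconv ν + L * D := by
  have hadd := hμ.integrable_integral_comp_smul_add hν hφ.continuous x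
  have hinner : ∀ᵐ h ∂ν, ∫ g, φ (σ g (h • x)) ∂μ ≤
      ∫ g, φ (σ g (h • x) + σ h x) ∂μ + L * D := by
    filter_upwards [hν.ae_abs_le x] with h hh
    have hint : Integrable (fun g => φ (σ g (h • x) + σ h x)) μ :=
      hμ.integrable_comp (φ := fun t => φ (t + σ h x)) (by have := hφ.continuous; fun_prop) _
    have hmono := integral_mono (hμ.integrable_comp hφ.continuous (h • x))
      (hint.add (integrable_const (L * D))) fun g => le_add_mul_of_abs_sub_le hφ
        (s := σ g (h • x)) (t := σ g (h • x) + σ h x) (by simpa using hh)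
    simpa [integral_add hint (integrable_const _)] using hmono
  have hmono := integral_mono_ae (hμ.integrable_integral_comp_smul hφ.continuous x)
    (hadd.add (integrable_const (L * D))) hinner
  rw [hμ.integral_comp_mconv hν hφ.continuous]
  simpa [integral_add hadd (integrable_const _)] using hmono

lemma integral_comp_mconv_le [IsProbabilityMeasure μ] [IsProbabilityMeasure ν]
    (hμ : IsBoundedCocycle μ C σ) (hν : IsBoundedCocycle ν D σ) {φ : ℝ → ℝ} {L : NNReal}
    (hφ : LipschitzWith L φ) (x : X) :
    ∫ g, φ (σ g x) ∂μ.mconv ν ≤ ∫ h, φ (σ h x) ∂ν + L * C := by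
  have hinner (h : G) : ∫ g, φ (σ g (h • x) + σ h x) ∂μ ≤ φ (σ h x) + L * C := by
    have hint : Integrable (fun g => φ (σ g (h • x) + σ h x)) μ :=
      hμ.integrable_comp (φ := fun t => φ (t + σ h x)) (by have := hφ.continuous; fun_prop) _
    have hmono := integral_mono_ae hint (integrable_const (φ (σ h x) + L * C))
      ((hμ.ae_abs_le (h • x)).mono fun g hg => le_add_mul_of_abs_sub_le hφ
        (s := σ g (h • x) + σ h x) (t := σ h x) (by simpa using hg))
    simpa using hmono
  have hint := hν.integrable_comp hφ.continuous x
  have hmono := integral_mono (hμ.integrable_integral_comp_smul_add hν hφ.continuous x)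
    (hint.add (integrable_const (L * C))) hinner
  rw [hμ.integral_comp_mconv hν hφ.continuous]
  simpa [integral_add hint (integrable_const _)] using hmono

end IsBoundedCocycle

/-- The expected value `∫ σ(g, x) dμ^{*n}(g)` of a cocycle along `n` random steps from `x`. -/
def expectedGrowth (μ : Measure G) (σ : G → X → ℝ) (n : ℕ) (x : X) : ℝ :=
  ∫ g, σ g x ∂convPow μ n

/-- The smallest expected growth over `n` random steps, among all starting points. -/
def minGrowth (μ : Measure G) (σ : G → X → ℝ) (n : ℕ) : ℝ :=
  ⨅ x, expectedGrowth μ σ n x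

/-- The linear rate `β` of the superadditive sequence `minGrowth μ σ`. -/
def minGrowthRate (μ : Measure G) (σ : G → X → ℝ) : ℝ :=
  limUnder atTop fun n : ℕ => minGrowth μ σ n / n

variable [MeasurableMul₂ G] {μ : Measure G} [IsProbabilityMeasure μ] {C : ℝ} {σ : G → X → ℝ}

namespace IsBoundedCocycle

lemma expectedGrowth_add (hσ : IsBoundedCocycle μ C σ) (m n : ℕ) (x : X) :
    expectedGrowth μ σ (m + n) x =
      expectedGrowth μ σ n x + ∫ h, expectedGrowth μ σ m (h • x) ∂convPow μ n := by
  rw [expectedGrowth, convPow_add]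
  exact (hσ.convPow m).integral_mconv (hσ.convPow n) x

lemma abs_expectedGrowth_le (hσ : IsBoundedCocycle μ C σ) (n : ℕ) (x : X) :
    |expectedGrowth μ σ n x| ≤ n * C :=
  (hσ.convPow n).abs_integral_le x

lemma integrable_expectedGrowth_smul (hσ : IsBoundedCocycle μ C σ) (m n : ℕ) (x : X) :
    Integrable (fun h => expectedGrowth μ σ m (h • x)) (convPow μ n) :=
  (hσ.convPow m).integrable_integral_smul x

lemma expectedGrowth_add_le (hσ : IsBoundedCocycle μ C σ) (m n : ℕ) (x : X) :
    expectedGrowth μ σ (m + n) x ≤ expectedGrowth μ σ n x + m * C := by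
  have hle : ∫ h, expectedGrowth μ σ m (h • x) ∂convPow μ n ≤ m * C := by
    simpa using integral_mono (hσ.integrable_expectedGrowth_smul m n x)
      (integrable_const (m * C)) fun h => (abs_le.mp (hσ.abs_expectedGrowth_le m (h • x))).2
  rw [hσ.expectedGrowth_add]
  linarith

lemma minGrowth_le (hσ : IsBoundedCocycle μ C σ) (n : ℕ) (x : X) :
    minGrowth μ σ n ≤ expectedGrowth μ σ n x := by
  refine ciInf_le ⟨-(n * C), ?_⟩ x
  rintro _ ⟨y, rfl⟩
  exact (abs_le.mp (hσ.abs_expectedGrowth_le n y)).1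

section MinGrowth

variable [Nonempty X]

lemma minGrowth_add_le (hσ : IsBoundedCocycle μ C σ) (m n : ℕ) :
    minGrowth μ σ m + minGrowth μ σ n ≤ minGrowth μ σ (m + n) := by
  refine le_ciInf fun x => ?_
  have hm : minGrowth μ σ m ≤ ∫ h, expectedGrowth μ σ m (h • x) ∂convPow μ n := by
    simpa using integral_mono (integrable_const (minGrowth μ σ m))
      (hσ.integrable_expectedGrowth_smul m n x) fun h => hσ.minGrowth_le m (h • x)
  rw [hσ.expectedGrowth_add]
  linarith [hσ.minGrowth_le n x]

lemma subadditive_neg_minGrowth (hσ : IsBoundedCocycle μ C σ) :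
    Subadditive fun n => -minGrowth μ σ n := fun m n => by
  linarith [hσ.minGrowth_add_le m n]

lemma bddBelow_neg_minGrowth_div (hσ : IsBoundedCocycle μ C σ) :
    BddBelow (Set.range fun n : ℕ => -minGrowth μ σ n / n) := by
  obtain ⟨x⟩ := ‹Nonempty X›
  refine ⟨-C, ?_⟩
  rintro _ ⟨n, rfl⟩
  rcases n.eq_zero_or_pos with rfl | hn
  · simpa using hσ.nonneg x
  · rw [le_div_iff₀ (Nat.cast_pos.mpr hn)]
    linarith [hσ.minGrowth_le n x, (abs_le.mp (hσ.abs_expectedGrowth_le n x)).2]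

lemma tendsto_minGrowth_div (hσ : IsBoundedCocycle μ C σ) :
    Tendsto (fun n : ℕ => minGrowth μ σ n / n) atTop (nhds (minGrowthRate μ σ)) := by
  refine tendsto_nhds_limUnder ⟨-hσ.subadditive_neg_minGrowth.lim, ?_⟩
  simpa [neg_div] using
    (hσ.subadditive_neg_minGrowth.tendsto_lim hσ.bddBelow_neg_minGrowth_div).neg

lemma minGrowth_le_mul_rate (hσ : IsBoundedCocycle μ C σ) {n : ℕ} (hn : 0 < n) :
    minGrowth μ σ n ≤ n * minGrowthRate μ σ := by
  have hlim := hσ.subadditive_neg_minGrowth.tendsto_lim hσ.bddBelow_neg_minGrowth_div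
  have hrate : -minGrowthRate μ σ = hσ.subadditive_neg_minGrowth.lim :=
    tendsto_nhds_unique (by simpa [neg_div] using hσ.tendsto_minGrowth_div.neg) hlim
  have hle := hσ.subadditive_neg_minGrowth.lim_le_div hσ.bddBelow_neg_minGrowth_div hn.ne'
  rw [← hrate, le_div_iff₀ (Nat.cast_pos.mpr hn)] at hle
  linarith

end MinGrowth

/-- Conditioning on the first `q` steps, the last step adds a centred increment up to a
nonpositive drift, so second moments of the shortfall grow linearly. -/
lemma integral_sq_shortfall_convPow_le (hσ : IsBoundedCocycle μ C σ) {a : ℝ}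
    (ha : ∀ x, a ≤ ∫ g, σ g x ∂μ) (q : ℕ) (x : X) :
    ∫ g, max (q * a - σ g x) 0 ^ 2 ∂convPow μ q ≤ q * C ^ 2 := by
  induction q with
  | zero =>
    have hmeas : Measurable fun g : G => max (((0 : ℕ) : ℝ) * a - σ g x) 0 ^ 2 :=
      ((measurable_const.sub (hσ.measurable x)).max measurable_const).pow_const 2
    rw [convPow, integral_dirac' _ _ hmeas.stronglyMeasurable]
    simp [hσ.one]
  | succ q ih =>
    have hstep (h : G) : ∫ g, max ((q + 1 : ℕ) * a - (σ g (h • x) + σ h x)) 0 ^ 2 ∂μ ≤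
        max (q * a - σ h x) 0 ^ 2 + C ^ 2 := by
      convert hσ.integral_sq_shortfall_le (ha (h • x)) (q * a - σ h x) using 5
      push_cast
      ring
    have hint : Integrable (fun h => max (q * a - σ h x) 0 ^ 2) (convPow μ q) :=
      (hσ.convPow q).integrable_comp (φ := fun t => max (q * a - t) 0 ^ 2) (by fun_prop) x
    rw [convPow_succ', hσ.integral_comp_mconv (hσ.convPow q)
      (φ := fun t => max ((q + 1 : ℕ) * a - t) 0 ^ 2) (by fun_prop) x]
    calc _ ≤ ∫ h, (max (q * a - σ h x) 0 ^ 2 + C ^ 2) ∂convPow μ q :=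
          integral_mono_of_nonneg (.of_forall fun h => integral_nonneg fun g => sq_nonneg _)
            (hint.add (integrable_const _)) (.of_forall hstep)
      _ ≤ (q + 1 : ℕ) * C ^ 2 := by
          rw [integral_add hint (integrable_const _)]
          simp only [integral_const, probReal_univ, one_smul]
          push_cast
          linarith

end IsBoundedCocycle

/-- The expected amount by which the empirical growth rate `σ(g, x) / n` falls short of `β`. -/
def meanDeficit (μ : Measure G) (σ : G → X → ℝ) (β : ℝ) (n : ℕ) (x : X) : ℝ :=
  ∫ g, max (β - σ g x / n) 0 ∂convPow μ n

/-- The expected amount by which the empirical growth rate `σ(g, x) / n` exceeds `β`. -/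
def meanExcess (μ : Measure G) (σ : G → X → ℝ) (β : ℝ) (n : ℕ) (x : X) : ℝ :=
  ∫ g, max (σ g x / n - β) 0 ∂convPow μ n

omit [MeasurableMul₂ G] [IsProbabilityMeasure μ] [MulAction G X] in
lemma meanExcess_nonneg (β : ℝ) (n : ℕ) (x : X) : 0 ≤ meanExcess μ σ β n x :=
  integral_nonneg fun _ => le_max_right _ _

namespace IsBoundedCocycle

lemma meanExcess_eq (hσ : IsBoundedCocycle μ C σ) (β : ℝ) (n : ℕ) (x : X) :
    meanExcess μ σ β n x = expectedGrowth μ σ n x / n - β + meanDeficit μ σ β n x := by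
  have hexcess : Integrable (fun g => max (σ g x / n - β) 0) (convPow μ n) :=
    (hσ.convPow n).integrable_comp (φ := fun t => max (t / n - β) 0) (by fun_prop) x
  have hdeficit : Integrable (fun g => max (β - σ g x / n) 0) (convPow μ n) :=
    (hσ.convPow n).integrable_comp (φ := fun t => max (β - t / n) 0) (by fun_prop) x
  have hsub : meanExcess μ σ β n x - meanDeficit μ σ β n x =
      ∫ g, (σ g x / n - β) ∂convPow μ n := by
    rw [meanExcess, meanDeficit, ← integral_sub hexcess hdeficit]
    refine integral_congr_ae (.of_forall fun g => ?_)
    simpa using max_zero_sub_max_neg_zero_eq_self (σ g x / n - β)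
  rw [integral_sub (((hσ.convPow n).integrable x).div_const _) (integrable_const _),
    integral_div] at hsub
  simp only [integral_const, probReal_univ, one_smul] at hsub
  rw [expectedGrowth]
  linarith

lemma meanDeficit_mul_le (hσ : IsBoundedCocycle μ C σ) {β ε : ℝ} (hε : 0 < ε) {m q : ℕ}
    (hm : 0 < m) (hq : 0 < q) (hβ : m * (β - ε) ≤ minGrowth μ σ m) (x : X) :
    meanDeficit μ σ β (m * q) x ≤ 2 * ε + C ^ 2 / (4 * ε * q) := by
  have : (0 : ℝ) < m := Nat.cast_pos.mpr hm
  have : (0 : ℝ) < q := Nat.cast_pos.mpr hq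
  set shortfall : G → ℝ := fun g => max (q * minGrowth μ σ m - σ g x) 0
  have hsecond : ∫ g, shortfall g ^ 2 ∂convPow μ (m * q) ≤ q * (m * C) ^ 2 := by
    rw [convPow_mul]
    exact (hσ.convPow m).integral_sq_shortfall_convPow_le (hσ.minGrowth_le m) q x
  have hint : Integrable (fun g => shortfall g ^ 2) (convPow μ (m * q)) :=
    (hσ.convPow (m * q)).integrable_comp
      (φ := fun t => max (q * minGrowth μ σ m - t) 0 ^ 2) (by fun_prop) x
  have hpointwise (g : G) : max (β - σ g x / (m * q : ℕ)) 0 ≤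
      2 * ε + shortfall g ^ 2 / (4 * ε * (m * q) ^ 2) := by
    rw [Nat.cast_mul]
    refine max_sub_div_le hε (by positivity) ?_ _
    calc (m * q : ℝ) * (β - ε) = q * (m * (β - ε)) := by ring
      _ ≤ q * minGrowth μ σ m := by gcongr
  calc meanDeficit μ σ β (m * q) x
      ≤ ∫ g, (2 * ε + shortfall g ^ 2 / (4 * ε * (m * q) ^ 2)) ∂convPow μ (m * q) :=
        integral_mono_of_nonneg (.of_forall fun g => le_max_right _ _)
          ((integrable_const _).add (hint.div_const _)) (.of_forall hpointwise)
    _ = 2 * ε + (∫ g, shortfall g ^ 2 ∂convPow μ (m * q)) / (4 * ε * (m * q) ^ 2) := by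
        rw [integral_add (integrable_const _) (hint.div_const _), integral_div]
        simp
    _ ≤ 2 * ε + q * (m * C) ^ 2 / (4 * ε * (m * q) ^ 2) := by gcongr
    _ = 2 * ε + C ^ 2 / (4 * ε * q) := by field_simp

lemma exists_meanDeficit_le [Nonempty X] (hσ : IsBoundedCocycle μ C σ) {ε : ℝ} (hε : 0 < ε)
    (N : ℕ) : ∃ n ≥ N, ∀ x, meanDeficit μ σ (minGrowthRate μ σ) n x ≤ ε := by
  obtain ⟨m, hrate, hm⟩ := ((hσ.tendsto_minGrowth_div.eventually
    (lt_mem_nhds (sub_lt_self _ (by positivity : 0 < ε / 4)))).and (eventually_gt_atTop 0)).exists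
  have hβ : m * (minGrowthRate μ σ - ε / 4) ≤ minGrowth μ σ m := by
    rw [lt_div_iff₀ (Nat.cast_pos.mpr hm)] at hrate
    linarith
  obtain ⟨q, hq⟩ := exists_nat_gt (max (2 * C ^ 2 / ε ^ 2) (N : ℝ))
  obtain ⟨hqC, hqN⟩ := max_lt_iff.mp hq
  have hq0 : 0 < q := Nat.cast_pos.mp ((Nat.cast_nonneg N).trans_lt hqN)
  refine ⟨m * q, (Nat.cast_lt.mp hqN).le.trans (Nat.le_mul_of_pos_left q hm), fun x => ?_⟩
  have hsmall : C ^ 2 / (4 * (ε / 4) * q) ≤ ε / 2 := by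
    rw [div_lt_iff₀ (by positivity)] at hqC
    rw [div_le_iff₀ (by positivity)]
    linarith
  linarith [hσ.meanDeficit_mul_le (by positivity) hm hq0 hβ x]

/-- Both sides telescope to a difference of sums of `expectedGrowth μ σ j x` over long ranges;
this is the discrete averaging that replaces a stationary measure. -/
lemma sum_integral_expectedGrowth_smul (hσ : IsBoundedCocycle μ C σ) (n N : ℕ) (x : X) :
    ∑ j ∈ Finset.range N, ∫ h, expectedGrowth μ σ n (h • x) ∂convPow μ j =
      ∑ j ∈ Finset.range n, (expectedGrowth μ σ (N + j) x - expectedGrowth μ σ j x) := by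
  have hincrement (j : ℕ) : ∫ h, expectedGrowth μ σ n (h • x) ∂convPow μ j =
      expectedGrowth μ σ (n + j) x - expectedGrowth μ σ j x := by
    rw [hσ.expectedGrowth_add, add_sub_cancel_left]
  simp_rw [hincrement, Finset.sum_sub_distrib]
  have hn := Finset.sum_range_add (fun j => expectedGrowth μ σ j x) n N
  have hN := Finset.sum_range_add (fun j => expectedGrowth μ σ j x) N n
  rw [add_comm N n] at hN
  linarith

lemma sum_integral_expectedGrowth_smul_le (hσ : IsBoundedCocycle μ C σ) (n N : ℕ)
    (x : X) : ∑ j ∈ Finset.range N, ∫ h, expectedGrowth μ σ n (h • x) ∂convPow μ j ≤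
      n * (expectedGrowth μ σ N x + 2 * n * C) := by
  have hterm (j : ℕ) (hj : j ∈ Finset.range n) :
      expectedGrowth μ σ (N + j) x - expectedGrowth μ σ j x ≤
        expectedGrowth μ σ N x + 2 * n * C := by
    have hjn : (j : ℝ) * C ≤ n * C :=
      mul_le_mul_of_nonneg_right (Nat.cast_le.mpr (Finset.mem_range.mp hj).le) (hσ.nonneg x)
    have hupper := hσ.expectedGrowth_add_le j N x
    have hlower := (abs_le.mp (hσ.abs_expectedGrowth_le j x)).1
    rw [add_comm N j]
    linarith
  rw [hσ.sum_integral_expectedGrowth_smul]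
  simpa only [Finset.card_range, nsmul_eq_mul] using Finset.sum_le_card_nsmul _ _ _ hterm

lemma integral_sum_growth_sub (hσ : IsBoundedCocycle μ C σ) (n : ℕ → ℕ) (β : ℝ) (K j : ℕ)
    (x : X) :
    Integrable (fun h => ∑ k ∈ Finset.range K, (expectedGrowth μ σ (n k) (h • x) / n k - β))
        (convPow μ j) ∧
      ∫ h, ∑ k ∈ Finset.range K, (expectedGrowth μ σ (n k) (h • x) / n k - β) ∂convPow μ j =
        ∑ k ∈ Finset.range K,
          ((∫ h, expectedGrowth μ σ (n k) (h • x) ∂convPow μ j) / n k - β) := by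
  have hint (k : ℕ) : Integrable (fun h => expectedGrowth μ σ (n k) (h • x) / n k)
      (convPow μ j) := (hσ.integrable_expectedGrowth_smul (n k) j x).div_const _
  have hterm (k : ℕ) : Integrable (fun h => expectedGrowth μ σ (n k) (h • x) / n k - β)
      (convPow μ j) := (hint k).sub (integrable_const β)
  refine ⟨integrable_finsetSum _ fun k _ => hterm k, ?_⟩
  rw [integral_finsetSum _ fun k _ => hterm k]
  refine Finset.sum_congr rfl fun k _ => ?_
  rw [integral_sub (hint k) (integrable_const β), integral_div]
  simp

lemma exists_sum_growth_sub_rate_le [Nonempty X] (hσ : IsBoundedCocycle μ C σ) {n : ℕ → ℕ}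
    (hn : ∀ k, 0 < n k) (K : ℕ) :
    ∃ x, ∑ k ∈ Finset.range K, (expectedGrowth μ σ (n k) x / n k - minGrowthRate μ σ) ≤ 1 := by
  set β := minGrowthRate μ σ
  by_contra! hlarge
  obtain ⟨N, hN⟩ := exists_nat_gt (K + ∑ k ∈ Finset.range K, 2 * n k * C)
  have hN0 : 0 < N := by
    have hC := hσ.nonneg (Classical.arbitrary X)
    exact Nat.cast_pos.mp ((show (0 : ℝ) ≤ _ by positivity).trans_lt hN)
  obtain ⟨x, hx⟩ := exists_lt_of_ciInf_lt (lt_add_one (minGrowth μ σ N))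
  have hxβ : expectedGrowth μ σ N x ≤ N * β + 1 := by linarith [hσ.minGrowth_le_mul_rate hN0]
  have haverage (j : ℕ) : 1 ≤ ∑ k ∈ Finset.range K,
      ((∫ h, expectedGrowth μ σ (n k) (h • x) ∂convPow μ j) / n k - β) := by
    obtain ⟨hint, heq⟩ := hσ.integral_sum_growth_sub n β K j x
    rw [← heq]
    simpa using integral_mono (integrable_const 1) hint fun h => (hlarge (h • x)).le
  have hupper : (N : ℝ) ≤ K + ∑ k ∈ Finset.range K, 2 * n k * C := by
    calc (N : ℝ) = ∑ _j ∈ Finset.range N, (1 : ℝ) := by simp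
      _ ≤ ∑ j ∈ Finset.range N, ∑ k ∈ Finset.range K,
            ((∫ h, expectedGrowth μ σ (n k) (h • x) ∂convPow μ j) / n k - β) :=
          Finset.sum_le_sum fun j _ => haverage j
      _ = ∑ k ∈ Finset.range K, ((∑ j ∈ Finset.range N,
            ∫ h, expectedGrowth μ σ (n k) (h • x) ∂convPow μ j) / n k - N * β) := by
          rw [Finset.sum_comm]
          simp [Finset.sum_div]
      _ ≤ ∑ k ∈ Finset.range K, (1 + 2 * n k * C) := by
          refine Finset.sum_le_sum fun k _ => ?_
          have hk : (0 : ℝ) < n k := Nat.cast_pos.mpr (hn k)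
          have hsum := hσ.sum_integral_expectedGrowth_smul_le (n k) N x
          rw [← div_le_iff₀' hk] at hsum
          linarith
      _ = K + ∑ k ∈ Finset.range K, 2 * n k * C := by simp [Finset.sum_add_distrib]
  exact hN.not_ge hupper

lemma continuous_meanExcess [TopologicalSpace X] [FirstCountableTopology X]
    (hσ : IsBoundedCocycle μ C σ) (hcont : ∀ g, Continuous (σ g)) (β : ℝ) (n : ℕ) :
    Continuous (meanExcess μ σ β n) :=
  (hσ.convPow n).continuous_integral_comp hcont (φ := fun t => max (t / n - β) 0) (by fun_prop)

lemma exists_sum_meanExcess_le [Nonempty X] (hσ : IsBoundedCocycle μ C σ) {n : ℕ → ℕ}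
    (hn : ∀ k, 0 < n k)
    (hdeficit : ∀ k x, meanDeficit μ σ (minGrowthRate μ σ) (n k) x ≤ (1 / 2) ^ k) (K : ℕ) :
    ∃ x, ∑ k ∈ Finset.range K, meanExcess μ σ (minGrowthRate μ σ) (n k) x ≤ 3 := by
  obtain ⟨x, hx⟩ := hσ.exists_sum_growth_sub_rate_le hn K
  have hgeom : ∑ k ∈ Finset.range K, ((1 : ℝ) / 2) ^ k ≤ 2 :=
    sum_geometric_two_le K
  refine ⟨x, ?_⟩
  simp_rw [hσ.meanExcess_eq, Finset.sum_add_distrib]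
  linarith [Finset.sum_le_sum fun k (_ : k ∈ Finset.range K) => hdeficit k x]

lemma exists_summable_meanExcess [TopologicalSpace X] [FirstCountableTopology X]
    [CompactSpace X] [Nonempty X] (hσ : IsBoundedCocycle μ C σ) (hcont : ∀ g, Continuous (σ g)) :
    ∃ n : ℕ → ℕ, (∀ k, 2 ^ k ≤ n k) ∧
      ∃ x, Summable fun k => meanExcess μ σ (minGrowthRate μ σ) (n k) x := by
  set β := minGrowthRate μ σ
  choose n hn hdeficit using fun k : ℕ =>
    hσ.exists_meanDeficit_le (ε := (1 / 2) ^ k) (by positivity) (2 ^ k)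
  refine ⟨n, hn, ?_⟩
  let T : ℕ → Set X := fun K => {x | ∑ k ∈ Finset.range K, meanExcess μ σ β (n k) x ≤ 3}
  have hclosed (K : ℕ) : IsClosed (T K) := isClosed_le
    (continuous_finsetSum _ fun k _ => hσ.continuous_meanExcess hcont β (n k)) continuous_const
  have hanti (K : ℕ) : T (K + 1) ⊆ T K := fun x hx => by
    have hsucc := Finset.sum_range_succ (fun k => meanExcess μ σ β (n k) x) K
    have hnonneg : 0 ≤ meanExcess μ σ β (n K) x := meanExcess_nonneg β (n K) x
    simp only [T, Set.mem_ofPred_eq] at hx ⊢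
    linarith
  obtain ⟨x, hx⟩ := IsCompact.nonempty_iInter_of_sequence_nonempty_isCompact_isClosed T hanti
    (hσ.exists_sum_meanExcess_le (fun k => (Nat.two_pow_pos k).trans_le (hn k)) hdeficit)
    (hclosed 0).isCompact hclosed
  exact ⟨x, summable_of_sum_range_le (fun k => meanExcess_nonneg β (n k) x)
    fun K => Set.mem_iInter.mp hx K⟩

lemma integral_max_le_sum_meanExcess {ι : Type*} [Fintype ι] (hσ : IsBoundedCocycle μ C σ)
    {f : G → ℝ} {x : ι → X} {c : ℝ} (hc : 0 ≤ c) (hf : ∀ g, ∃ i, f g ≤ σ g (x i) + c)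
    (β : ℝ) (n : ℕ) :
    ∫ g, max (f g / n - β) 0 ∂convPow μ n ≤ ∑ i, meanExcess μ σ β n (x i) + c / n := by
  have hint (i : ι) : Integrable (fun g => max (σ g (x i) / n - β) 0) (convPow μ n) :=
    (hσ.convPow n).integrable_comp (φ := fun t => max (t / n - β) 0) (by fun_prop) (x i)
  have hsum : Integrable (fun g => ∑ i, max (σ g (x i) / n - β) 0) (convPow μ n) :=
    integrable_finsetSum _ fun i _ => hint i
  have hpointwise (g : G) :
      max (f g / n - β) 0 ≤ ∑ i, max (σ g (x i) / n - β) 0 + c / n := by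
    obtain ⟨i, hi⟩ := hf g
    have hterm : max (σ g (x i) / n - β) 0 ≤ ∑ i, max (σ g (x i) / n - β) 0 :=
      Finset.single_le_sum (f := fun i => max (σ g (x i) / n - β) 0)
        (fun _ _ => le_max_right _ _) (Finset.mem_univ i)
    have hdiv : f g / n ≤ σ g (x i) / n + c / n := by
      rw [← add_div]
      gcongr
    have hc' : 0 ≤ c / n := by positivity
    exact max_le (by linarith [le_max_left (σ g (x i) / n - β) 0])
      (by linarith [le_max_right (σ g (x i) / n - β) 0])
  calc ∫ g, max (f g / n - β) 0 ∂convPow μ n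
      ≤ ∫ g, (∑ i, max (σ g (x i) / n - β) 0 + c / n) ∂convPow μ n :=
        integral_mono_of_nonneg (.of_forall fun _ => le_max_right _ _)
          (hsum.add (integrable_const _)) (.of_forall hpointwise)
    _ = ∑ i, meanExcess μ σ β n (x i) + c / n := by
        rw [integral_add hsum (integrable_const _), integral_finsetSum _ fun i _ => hint i]
        simp [meanExcess]

lemma summable_integral_max {ι : Type*} [Finite ι] (hσ : IsBoundedCocycle μ C σ)
    {f : G → ℝ} {x : ι → X} {c : ℝ} (hc : 0 ≤ c) (hf : ∀ g, ∃ i, f g ≤ σ g (x i) + c)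
    {β : ℝ} {n : ℕ → ℕ} (hn : Summable fun k => (n k : ℝ)⁻¹)
    (hx : ∀ i, Summable fun k => meanExcess μ σ β (n k) (x i)) :
    Summable fun k => ∫ g, max (f g / n k - β) 0 ∂convPow μ (n k) := by
  have := Fintype.ofFinite ι
  refine .of_nonneg_of_le (fun k => integral_nonneg fun _ => le_max_right _ _)
    (fun k => hσ.integral_max_le_sum_meanExcess hc hf β (n k)) ?_
  simpa only [div_eq_mul_inv] using (summable_sum fun i _ => hx i).add (hn.mul_left c)

lemma integral_meanExcess_smul_le (hσ : IsBoundedCocycle μ C σ) (β : ℝ) (n : ℕ)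
    (x : X) : ∫ h, meanExcess μ σ β n (h • x) ∂μ ≤ meanExcess μ σ β n x + 2 * C * (n : ℝ)⁻¹ := by
  have hφ : LipschitzWith (n : NNReal)⁻¹ fun t : ℝ => max (t / n - β) 0 := by
    refine LipschitzWith.max_const ?_ 0
    refine .of_dist_le_mul fun s t => ?_
    rw [Real.dist_eq, Real.dist_eq, sub_sub_sub_cancel_right, ← sub_div, abs_div, Nat.abs_cast,
      div_eq_inv_mul]
    simp
  have hshift := (hσ.convPow n).integral_comp_smul_le hσ hφ x
  have hextra := hσ.integral_comp_mconv_le (hσ.convPow n) hφ x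
  rw [← convPow, convPow_succ'] at hshift
  simp only [NNReal.coe_inv, NNReal.coe_natCast] at hshift hextra
  simp only [meanExcess]
  linarith

lemma ae_summable_meanExcess_smul (hσ : IsBoundedCocycle μ C σ) {β : ℝ}
    {n : ℕ → ℕ} (hn : Summable fun k => (n k : ℝ)⁻¹) {x : X}
    (hx : Summable fun k => meanExcess μ σ β (n k) x) :
    ∀ᵐ h ∂μ, Summable fun k => meanExcess μ σ β (n k) (h • x) := by
  refine ae_summable_of_summable_integral (fun k => ?_)
    (fun k h => meanExcess_nonneg β (n k) (h • x)) ?_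
  · exact (hσ.convPow (n k)).integrable_integral_comp_smul
      (φ := fun t => max (t / n k - β) 0) (by fun_prop) x
  · exact .of_nonneg_of_le (fun k => integral_nonneg fun h => meanExcess_nonneg β (n k) (h • x))
      (fun k => hσ.integral_meanExcess_smul_le β (n k) x) (hx.add (hn.mul_left _))

end IsBoundedCocycle

end Cocycles

section LinearCocycle

instance : SecondCountableTopology (GLd d) := by
  have : SecondCountableTopology (Matrix (Fin d) (Fin d) ℝ) :=
    inferInstanceAs (SecondCountableTopology (Fin d → Fin d → ℝ))
  have : SecondCountableTopology (Matrix (Fin d) (Fin d) ℝ)ᵐᵒᵖ :=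
    MulOpposite.opHomeomorph.symm.isEmbedding.secondCountableTopology
  exact Units.isEmbedding_embedProduct.secondCountableTopology

lemma mconvN_eq_convPow (μ : Measure (GLd d)) [IsProbabilityMeasure μ] (n : ℕ) :
    mconvN μ n = convPow μ n := by
  induction n with
  | zero => rfl
  | succ n ih =>
    rcases n.eq_zero_or_pos with rfl | hn
    · rw [convPow_one]
      rfl
    · rw [mconvN, if_neg hn.ne', ih, convPow]
      rfl

lemma isOpenQuotientMap_projectivization_mk :
    IsOpenQuotientMap fun v : {v : Ed d // v ≠ 0} => Projectivization.mk ℝ v.1 v.2 where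
  surjective := fun x => ⟨⟨x.rep, x.rep_nonzero⟩, x.mk_rep⟩
  continuous := continuous_quotient_mk'
  isOpenMap U hU := by
    have hpre : (fun v : {v : Ed d // v ≠ 0} => Projectivization.mk ℝ v.1 v.2) ⁻¹'
        ((fun v => Projectivization.mk ℝ v.1 v.2) '' U) = ⋃ a : ℝˣ, (a • ·) ⁻¹' U := by
      ext w
      simp only [Set.mem_preimage, Set.mem_image, Set.mem_iUnion]
      constructor
      · rintro ⟨v, hv, hvw⟩
        obtain ⟨a, ha⟩ := (Projectivization.mk_eq_mk_iff ℝ v.1 w.1 v.2 w.2).mp hvw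
        exact ⟨a, (Subtype.ext ha : a • w = v) ▸ hv⟩
      · rintro ⟨a, ha⟩
        exact ⟨a • w, ha, (Projectivization.mk_eq_mk_iff ℝ _ _ _ _).mpr ⟨a, rfl⟩⟩
    refine isOpen_coinduced.mpr (hpre ▸ isOpen_iUnion fun a => hU.preimage ?_)
    exact (continuous_subtype_val.const_smul a).subtype_mk fun v => (a • v).2

instance : SecondCountableTopology (Pd d) :=
  isOpenQuotientMap_projectivization_mk.isQuotientMap.secondCountableTopology
    isOpenQuotientMap_projectivization_mk.isOpenMap

instance : CompactSpace (Pd d) := by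
  let f : Metric.sphere (0 : Ed d) 1 → Pd d := fun v =>
    Projectivization.mk ℝ v.1 (ne_zero_of_mem_unit_sphere v)
  have hcont : Continuous f := isOpenQuotientMap_projectivization_mk.continuous.comp
    (continuous_subtype_val.subtype_mk ne_zero_of_mem_unit_sphere)
  have hsurj : Function.Surjective f := fun x => by
    have hx : ‖(‖x.rep‖⁻¹ • x.rep : Ed d)‖ = 1 := norm_smul_inv_norm (𝕜 := ℝ) x.rep_nonzero
    refine ⟨⟨‖x.rep‖⁻¹ • x.rep, mem_sphere_zero_iff_norm.mpr hx⟩, ?_⟩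
    conv_rhs => rw [← x.mk_rep]
    exact (Projectivization.mk_eq_mk_iff' ℝ _ _ _ _).mpr ⟨‖x.rep‖⁻¹, rfl⟩
  exact hsurj.compactSpace hcont

lemma continuous_glCLM : Continuous (glCLM : GLd d → Ed d →L[ℝ] Ed d) := by
  let f : Matrix (Fin d) (Fin d) ℝ →ₗ[ℝ] (Ed d →L[ℝ] Ed d) :=
    { toFun := Matrix.toEuclideanCLM (𝕜 := ℝ)
      map_add' := map_add _
      map_smul' := map_smul _ }
  exact f.continuous_of_finiteDimensional.comp Units.continuous_val

lemma norm_smul_le_gnorm_mul (g : GLd d) (v : Ed d) : ‖g • v‖ ≤ gnorm g * ‖v‖ :=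
  (glCLM g).le_opNorm v

lemma norm_smul_pos (g : GLd d) {v : Ed d} (hv : v ≠ 0) : 0 < ‖g • v‖ :=
  norm_pos_iff.mpr ((smul_ne_zero_iff_ne g).mpr hv)

/-- The projective norm cocycle `log (‖g v‖ / ‖v‖)` of `GL_d(ℝ)` acting on lines `ℝ v`. -/
def logGrowth (g : GLd d) (x : Pd d) : ℝ :=
  Real.log ‖g • x.rep‖ - Real.log ‖x.rep‖

lemma logGrowth_mk (g : GLd d) {v : Ed d} (hv : v ≠ 0) :
    logGrowth g (Projectivization.mk ℝ v hv) = Real.log ‖g • v‖ - Real.log ‖v‖ := by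
  obtain ⟨a, ha⟩ := Projectivization.exists_smul_eq_mk_rep ℝ v hv
  have hga : g • (a : ℝ) • v = (a : ℝ) • g • v := map_smul (glCLM g) (a : ℝ) v
  have hnorm : ‖(a : ℝ)‖ ≠ 0 := norm_ne_zero_iff.mpr a.ne_zero
  rw [logGrowth, ← ha, Units.smul_def a, hga, norm_smul (a : ℝ), norm_smul (a : ℝ),
    Real.log_mul hnorm (norm_smul_pos g hv).ne', Real.log_mul hnorm (norm_ne_zero_iff.mpr hv)]
  ring

lemma logGrowth_mul (g h : GLd d) (x : Pd d) :
    logGrowth (g * h) x = logGrowth g (h • x) + logGrowth h x := by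
  induction x using Projectivization.ind with
  | h v hv =>
    rw [Projectivization.smul_mk, logGrowth_mk, logGrowth_mk, logGrowth_mk, mul_smul]
    ring

lemma continuous_logGrowth_left (x : Pd d) : Continuous fun g => logGrowth g x :=
  ((continuous_glCLM.clm_apply continuous_const).norm.log
    fun g => (norm_smul_pos g x.rep_nonzero).ne').sub continuous_const

lemma continuous_logGrowth_right (g : GLd d) : Continuous (logGrowth g) := by
  rw [isOpenQuotientMap_projectivization_mk.isQuotientMap.continuous_iff]
  have heq : logGrowth g ∘ (fun v : {v : Ed d // v ≠ 0} => Projectivization.mk ℝ v.1 v.2) =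
      fun v => Real.log ‖g • v.1‖ - Real.log ‖v.1‖ := funext fun v => logGrowth_mk g v.2
  rw [heq]
  exact (((glCLM g).continuous.comp continuous_subtype_val).norm.log
    fun v => (norm_smul_pos g v.2).ne').sub
    (continuous_subtype_val.norm.log fun v => norm_ne_zero_iff.mpr v.2)

lemma logGrowth_le_log_gnorm (g : GLd d) (x : Pd d) : logGrowth g x ≤ Real.log (gnorm g) := by
  have hpos := norm_smul_pos g x.rep_nonzero
  have hle := norm_smul_le_gnorm_mul g x.rep
  have hx : 0 < ‖x.rep‖ := norm_pos_iff.mpr x.rep_nonzero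
  have hg : 0 < gnorm g := pos_of_mul_pos_left (hpos.trans_le hle) hx.le
  have hlog := Real.log_le_log hpos hle
  rw [Real.log_mul hg.ne' hx.ne'] at hlog
  rw [logGrowth]
  linarith

lemma logGrowth_inv_smul (g : GLd d) (x : Pd d) : logGrowth g⁻¹ (g • x) = -logGrowth g x := by
  have hmul := logGrowth_mul g⁻¹ g x
  have hone : logGrowth (1 : GLd d) x = 0 := by rw [logGrowth, one_smul, sub_self]
  rw [inv_mul_cancel, hone] at hmul
  linarith

lemma exists_abs_logGrowth_le [NeZero d] {S : Set (GLd d)} (hS : IsCompact S) :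
    ∃ C, ∀ g ∈ S, ∀ x, |logGrowth g x| ≤ C := by
  have hpos (g : GLd d) : gnorm g ≠ 0 := by
    obtain ⟨v, hv⟩ := exists_ne (0 : Ed d)
    refine fun hg => (norm_smul_pos g hv).not_ge ?_
    simpa [hg] using norm_smul_le_gnorm_mul g v
  have hlog : Continuous fun g : GLd d => Real.log (gnorm g) := continuous_glCLM.norm.log hpos
  obtain ⟨C, hC⟩ := hS.exists_bound_of_continuousOn
    (hlog.max (hlog.comp continuous_inv)).continuousOn
  refine ⟨C, fun g hg x => abs_le'.mpr ⟨?_, ?_⟩⟩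
  · exact (logGrowth_le_log_gnorm g x).trans ((le_max_left _ _).trans
      ((Real.le_norm_self _).trans (hC g hg)))
  · rw [← logGrowth_inv_smul]
    exact (logGrowth_le_log_gnorm g⁻¹ _).trans ((le_max_right _ _).trans
      ((Real.le_norm_self _).trans (hC g hg)))

lemma isBoundedCocycle_logGrowth {μ : Measure (GLd d)} {C : ℝ}
    (hC : ∀ᵐ g ∂μ, ∀ x, |logGrowth g x| ≤ C) : IsBoundedCocycle μ C logGrowth where
  map_mul := logGrowth_mul
  measurable x := (continuous_logGrowth_left x).measurable
  ae_abs_le x := hC.mono fun _ hg => hg x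

end LinearCocycle

section Restriction

/-- The logarithm of the operator norm of the restriction of `g` to a subspace `V`; its averages
along convolution powers define `L1rest`. -/
def logNormOn (V : Submodule ℝ (Ed d)) (g : GLd d) : ℝ :=
  Real.log ‖glCLM g ∘L V.subtypeL‖

lemma logNormOn_top (g : GLd d) : logNormOn ⊤ g = Real.log (gnorm g) := by
  rw [logNormOn, gnorm]
  congr 1
  refine le_antisymm ?_ ((glCLM g).opNorm_le_bound (ContinuousLinearMap.opNorm_nonneg _) fun v =>
    (glCLM g ∘L (⊤ : Submodule ℝ (Ed d)).subtypeL).le_opNorm ⟨v, trivial⟩)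
  exact ((glCLM g).opNorm_comp_le _).trans
    (mul_le_of_le_one_right (norm_nonneg _) (Submodule.norm_subtypeL_le _))

lemma L1rest_top (μ : Measure (GLd d)) : L1rest μ ⊤ = L1 μ := by
  simp only [L1, ← logNormOn_top]
  rfl

variable {V : Submodule ℝ (Ed d)}

lemma norm_smul_le_norm_comp_subtypeL_mul (g : GLd d) {v : Ed d} (hv : v ∈ V) :
    ‖g • v‖ ≤ ‖glCLM g ∘L V.subtypeL‖ * ‖v‖ :=
  (glCLM g ∘L V.subtypeL).le_opNorm ⟨v, hv⟩

lemma norm_comp_subtypeL_pos (hV : V ≠ ⊥) (g : GLd d) : 0 < ‖glCLM g ∘L V.subtypeL‖ := by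
  obtain ⟨v, hv, hv0⟩ := V.exists_mem_ne_zero_of_ne_bot hV
  exact pos_of_mul_pos_left
    ((norm_smul_pos g hv0).trans_le (norm_smul_le_norm_comp_subtypeL_mul g hv)) (norm_nonneg v)

lemma continuous_logNormOn (hV : V ≠ ⊥) : Continuous (logNormOn V) :=
  (continuous_glCLM.clm_comp continuous_const).norm.log fun g => (norm_comp_subtypeL_pos hV g).ne'

lemma logGrowth_mk_le_logNormOn (g : GLd d) {v : Ed d} (hv : v ∈ V) (hv0 : v ≠ 0) :
    logGrowth g (Projectivization.mk ℝ v hv0) ≤ logNormOn V g := by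
  have hV : V ≠ ⊥ := V.ne_bot_iff.mpr ⟨v, hv, hv0⟩
  have hlog := Real.log_le_log (norm_smul_pos g hv0) (norm_smul_le_norm_comp_subtypeL_mul g hv)
  rw [Real.log_mul (norm_comp_subtypeL_pos hV g).ne' (norm_ne_zero_iff.mpr hv0)] at hlog
  rw [logGrowth_mk, logNormOn]
  linarith

lemma logNormOn_mul_le (hV : V ≠ ⊥) (g : GLd d) {h : GLd d} (hh : ∀ v ∈ V, h • v ∈ V) :
    logNormOn V (g * h) ≤ logNormOn V g + logNormOn V h := by
  rw [logNormOn, logNormOn, logNormOn, ← Real.log_mul (norm_comp_subtypeL_pos hV g).ne'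
    (norm_comp_subtypeL_pos hV h).ne']
  refine Real.log_le_log (norm_comp_subtypeL_pos hV _)
    (ContinuousLinearMap.opNorm_le_bound _ (by positivity) fun v => ?_)
  calc ‖(g * h) • (v : Ed d)‖ = ‖g • h • (v : Ed d)‖ := by rw [mul_smul]
    _ ≤ ‖glCLM g ∘L V.subtypeL‖ * ‖h • (v : Ed d)‖ :=
        norm_smul_le_norm_comp_subtypeL_mul g (hh v v.2)
    _ ≤ ‖glCLM g ∘L V.subtypeL‖ * (‖glCLM h ∘L V.subtypeL‖ * ‖(v : Ed d)‖) := by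
        gcongr
        exact norm_smul_le_norm_comp_subtypeL_mul h v.2
    _ = ‖glCLM g ∘L V.subtypeL‖ * ‖glCLM h ∘L V.subtypeL‖ * ‖v‖ := (mul_assoc _ _ _).symm

section Basis

variable {ι : Type*} (b : Module.Basis ι ℝ V)

/-- The line spanned by a basis vector of `V`. -/
def basisLine (i : ι) : Pd d :=
  Projectivization.mk ℝ (b i : Ed d) (V.coe_eq_zero.not.mpr (b.ne_zero i))

lemma logGrowth_basisLine_le (g : GLd d) (i : ι) :
    logGrowth g (basisLine b i) ≤ logNormOn V g :=
  logGrowth_mk_le_logNormOn g (b i).2 _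

lemma exists_logNormOn_le [Finite ι] (hV : V ≠ ⊥) :
    ∃ c, 0 ≤ c ∧ ∀ g, ∃ i, logNormOn V g ≤ logGrowth g (basisLine b i) + c := by
  have := Fintype.ofFinite ι
  have : Nontrivial V := V.nontrivial_iff_ne_bot.mpr hV
  have : Nonempty ι := b.index_nonempty
  obtain ⟨K, hK, hbound⟩ := b.exists_opNorm_le (F := Ed d)
  refine ⟨|Real.log K| + ∑ i, |Real.log ‖(b i : Ed d)‖|, by positivity, fun g => ?_⟩
  obtain ⟨i, hi⟩ := Finite.exists_max fun i => ‖g • (b i : Ed d)‖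
  have hb : (b i : Ed d) ≠ 0 := V.coe_eq_zero.not.mpr (b.ne_zero i)
  have hnorm : ‖glCLM g ∘L V.subtypeL‖ ≤ K * ‖g • (b i : Ed d)‖ := hbound (norm_nonneg _) hi
  have hlog := Real.log_le_log (norm_comp_subtypeL_pos hV g) hnorm
  rw [Real.log_mul hK.ne' (norm_smul_pos g hb).ne'] at hlog
  have hterm : |Real.log ‖(b i : Ed d)‖| ≤ ∑ i, |Real.log ‖(b i : Ed d)‖| :=
    Finset.single_le_sum (f := fun i => |Real.log ‖(b i : Ed d)‖|) (fun _ _ => abs_nonneg _)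
      (Finset.mem_univ i)
  refine ⟨i, ?_⟩
  rw [logNormOn, basisLine, logGrowth_mk]
  linarith [le_abs_self (Real.log K), le_abs_self (Real.log ‖(b i : Ed d)‖)]

end Basis

lemma integrable_logNormOn {ν : Measure (GLd d)} [IsFiniteMeasure ν] {C : ℝ}
    (hν : IsBoundedCocycle ν C logGrowth) (hV : V ≠ ⊥) : Integrable (logNormOn V) ν := by
  let b := Module.finBasis ℝ V
  obtain ⟨c, hc, hle⟩ := exists_logNormOn_le b hV
  have hsum : Integrable (fun g => ∑ i, |logGrowth g (basisLine b i)|) ν :=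
    integrable_finsetSum _ fun i _ => (hν.integrable _).abs
  refine (hsum.add (integrable_const c)).mono' (continuous_logNormOn hV).aestronglyMeasurable
    (.of_forall fun g => ?_)
  obtain ⟨i, hi⟩ := hle g
  have hterm : |logGrowth g (basisLine b i)| ≤ ∑ i, |logGrowth g (basisLine b i)| :=
    Finset.single_le_sum (f := fun i => |logGrowth g (basisLine b i)|) (fun _ _ => abs_nonneg _)
      (Finset.mem_univ i)
  have hlow := logGrowth_basisLine_le b g i
  refine abs_le.mpr ⟨?_, ?_⟩ <;> simp only [Pi.add_apply] <;>
    linarith [neg_abs_le (logGrowth g (basisLine b i)), le_abs_self (logGrowth g (basisLine b i))]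

lemma isClosed_setOf_smul_mem (V : Submodule ℝ (Ed d)) :
    IsClosed {g : GLd d | ∀ v ∈ V, g • v ∈ V} := by
  simp only [Set.ofPred_forall]
  exact isClosed_iInter fun v => isClosed_iInter fun _ =>
    V.closed_of_finiteDimensional.preimage (continuous_glCLM.clm_apply continuous_const)

variable {μ : Measure (GLd d)} [IsProbabilityMeasure μ] {C : ℝ}

lemma ae_convPow_smul_mem (hinv : ∀ᵐ g ∂μ, ∀ v ∈ V, g • v ∈ V) (n : ℕ) :
    ∀ᵐ g ∂convPow μ n, ∀ v ∈ V, g • v ∈ V := by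
  refine ae_convPow (isClosed_setOf_smul_mem V).measurableSet ?_ ?_ hinv n
  · exact fun v hv => (one_smul (GLd d) v).symm ▸ hv
  · exact fun g h hg hh v hv => (mul_smul g h v).symm ▸ hg _ (hh v hv)

lemma neg_le_integral_logNormOn (hσ : IsBoundedCocycle μ C logGrowth) (hV : V ≠ ⊥) (n : ℕ) :
    -(n * C) ≤ ∫ g, logNormOn V g ∂convPow μ n := by
  obtain ⟨v, hv, hv0⟩ := V.exists_mem_ne_zero_of_ne_bot hV
  calc -(n * C) ≤ ∫ g, logGrowth g (Projectivization.mk ℝ v hv0) ∂convPow μ n :=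
        (abs_le.mp ((hσ.convPow n).abs_integral_le _)).1
    _ ≤ ∫ g, logNormOn V g ∂convPow μ n :=
        integral_mono ((hσ.convPow n).integrable _) (integrable_logNormOn (hσ.convPow n) hV)
          fun g => logGrowth_mk_le_logNormOn g hv hv0

lemma tendsto_L1rest (hσ : IsBoundedCocycle μ C logGrowth) (hV : V ≠ ⊥)
    (hinv : ∀ᵐ g ∂μ, ∀ v ∈ V, g • v ∈ V) :
    Tendsto (fun n : ℕ => (∫ g, logNormOn V g ∂convPow μ n) / n) atTop (nhds (L1rest μ V)) := by
  have hsub : Subadditive fun n => ∫ g, logNormOn V g ∂convPow μ n :=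
    subadditive_integral_convPow (fun n => integrable_logNormOn (hσ.convPow n) hV) fun n =>
      (ae_convPow_smul_mem hinv n).mono fun h hh g => logNormOn_mul_le hV g hh
  have hbdd : BddBelow (Set.range fun n : ℕ => (∫ g, logNormOn V g ∂convPow μ n) / n) := by
    refine ⟨min (-C) 0, ?_⟩
    rintro _ ⟨n, rfl⟩
    rcases n.eq_zero_or_pos with rfl | hn
    · simp
    · refine min_le_of_left_le ((le_div_iff₀ (Nat.cast_pos.mpr hn)).mpr ?_)
      linarith [neg_le_integral_logNormOn hσ hV n]
  have hrest : L1rest μ V =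
      limUnder atTop fun n : ℕ => (∫ g, logNormOn V g ∂convPow μ n) / n := by
    simp only [← mconvN_eq_convPow, div_eq_inv_mul]
    rfl
  exact hrest ▸ tendsto_nhds_limUnder ⟨_, hsub.tendsto_lim hbdd⟩

end Restriction

section SlowSubspace

lemma exists_logGrowth_add_le {v w : Ed d} (hv : v ≠ 0) (hw : w ≠ 0) (hvw : v + w ≠ 0) :
    ∃ c, 0 ≤ c ∧ ∀ g, ∃ i, logGrowth g (Projectivization.mk ℝ (v + w) hvw) ≤
      logGrowth g (![Projectivization.mk ℝ v hv, Projectivization.mk ℝ w hw] i) + c := by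
  refine ⟨Real.log 2 + |Real.log ‖v‖| + |Real.log ‖w‖| + |Real.log ‖v + w‖|,
    by positivity, fun g => ?_⟩
  have hlog {u : Ed d} (hu : u ≠ 0) (hle : ‖g • (v + w)‖ ≤ 2 * ‖g • u‖) :
      Real.log ‖g • (v + w)‖ ≤ Real.log 2 + Real.log ‖g • u‖ := by
    rw [← Real.log_mul two_ne_zero (norm_smul_pos g hu).ne']
    exact Real.log_le_log (norm_smul_pos g hvw) hle
  have htriangle : ‖g • (v + w)‖ ≤ ‖g • v‖ + ‖g • w‖ := by
    rw [smul_add]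
    exact norm_add_le _ _
  have hv' := abs_le.mp (le_refl |Real.log ‖v‖|)
  have hw' := abs_le.mp (le_refl |Real.log ‖w‖|)
  have hvw' := neg_abs_le (Real.log ‖v + w‖)
  rcases le_total ‖g • v‖ ‖g • w‖ with hmax | hmax
  · refine ⟨1, ?_⟩
    simp only [Matrix.cons_val_one, Matrix.cons_val_fin_one, logGrowth_mk]
    linarith [hlog hw (by linarith), abs_nonneg (Real.log ‖v‖)]
  · refine ⟨0, ?_⟩
    simp only [Matrix.cons_val_zero, logGrowth_mk]
    linarith [hlog hv (by linarith), abs_nonneg (Real.log ‖w‖)]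

variable {μ : Measure (GLd d)} [IsProbabilityMeasure μ] {C : ℝ} {n : ℕ → ℕ}

/-- The subspace of all vectors whose expected excess growth over the rate `β` is summable along
the times `n k`. The zero vector, which spans no line, is included by convention. -/
def slowSubspace (hσ : IsBoundedCocycle μ C logGrowth) (hn : Summable fun k => (n k : ℝ)⁻¹)
    (β : ℝ) : Submodule ℝ (Ed d) where
  carrier := {v | ∀ hv : v ≠ 0,
    Summable fun k => meanExcess μ logGrowth β (n k) (Projectivization.mk ℝ v hv)}
  zero_mem' := fun h => absurd rfl h
  add_mem' {v w} hv hw hvw := by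
    rcases eq_or_ne v 0 with rfl | hv0
    · simpa only [zero_add] using hw (by simpa using hvw)
    rcases eq_or_ne w 0 with rfl | hw0
    · simpa only [add_zero] using hv hv0
    obtain ⟨c, hc, hle⟩ := exists_logGrowth_add_le hv0 hw0 hvw
    exact hσ.summable_integral_max hc hle hn (Fin.forall_fin_two.mpr ⟨hv hv0, hw hw0⟩)
  smul_mem' a v hv hav := by
    have hline : Projectivization.mk ℝ (a • v) hav =
        Projectivization.mk ℝ v (right_ne_zero_of_smul hav) :=
      (Projectivization.mk_eq_mk_iff' ℝ _ _ _ _).mpr ⟨a, rfl⟩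
    simpa only [hline] using hv (right_ne_zero_of_smul hav)

variable {β : ℝ}

lemma slowSubspace_ne_bot (hσ : IsBoundedCocycle μ C logGrowth)
    (hn : Summable fun k => (n k : ℝ)⁻¹) {x : Pd d}
    (hx : Summable fun k => meanExcess μ logGrowth β (n k) x) : slowSubspace hσ hn β ≠ ⊥ :=
  (Submodule.ne_bot_iff _).mpr ⟨x.rep, fun _ => x.mk_rep.symm ▸ hx, x.rep_nonzero⟩

lemma ae_smul_mem_slowSubspace (hσ : IsBoundedCocycle μ C logGrowth)
    (hn : Summable fun k => (n k : ℝ)⁻¹) {v : Ed d} (hv : v ∈ slowSubspace hσ hn β) :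
    ∀ᵐ h ∂μ, h • v ∈ slowSubspace hσ hn β := by
  rcases eq_or_ne v 0 with rfl | hv0
  · simp
  · filter_upwards [hσ.ae_summable_meanExcess_smul hn (hv hv0)] with h hh _ using hh

lemma ae_map_slowSubspace_eq (hσ : IsBoundedCocycle μ C logGrowth)
    (hn : Summable fun k => (n k : ℝ)⁻¹) :
    ∀ᵐ h ∂μ, (slowSubspace hσ hn β).map (glCLM h).toLinearMap = slowSubspace hσ hn β := by
  set V := slowSubspace hσ hn β
  let b := Module.finBasis ℝ V
  filter_upwards [ae_all_iff.mpr fun i => ae_smul_mem_slowSubspace hσ hn (b i).2] with h hh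
  have hcomap : (⊤ : Submodule ℝ V) ≤ V.comap ((glCLM h).toLinearMap ∘ₗ V.subtype) := by
    rw [← b.span_eq, Submodule.span_le, Set.range_subset_iff]
    exact hh
  have hmap : V.map (glCLM h).toLinearMap ≤ V :=
    Submodule.map_le_iff_le_comap.mpr fun v hv => hcomap (x := ⟨v, hv⟩) trivial
  exact Submodule.eq_of_le_of_finrank_eq hmap
    (V.equivMapOfInjective _ (glLinear_injective h)).finrank_eq.symm

lemma L1rest_le_of_summable {V : Submodule ℝ (Ed d)} (hσ : IsBoundedCocycle μ C logGrowth)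
    (hV : V ≠ ⊥) (hinv : ∀ᵐ g ∂μ, ∀ v ∈ V, g • v ∈ V) (hn : Tendsto n atTop atTop)
    (hsum : Summable fun k => ∫ g, max (logNormOn V g / n k - β) 0 ∂convPow μ (n k)) :
    L1rest μ V ≤ β := by
  have hlim := ((tendsto_L1rest hσ hV hinv).comp hn).sub_const β
  refine sub_nonpos.mp (le_of_tendsto_of_tendsto' hlim hsum.tendsto_atTop_zero fun k => ?_)
  have hint : Integrable (fun g => logNormOn V g / n k - β) (convPow μ (n k)) :=
    ((integrable_logNormOn (hσ.convPow (n k)) hV).div_const _).sub (integrable_const β)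
  calc (∫ g, logNormOn V g ∂convPow μ (n k)) / n k - β
      = ∫ g, (logNormOn V g / n k - β) ∂convPow μ (n k) := by
        rw [integral_sub ((integrable_logNormOn (hσ.convPow (n k)) hV).div_const _)
          (integrable_const β), integral_div]
        simp
    _ ≤ ∫ g, max (logNormOn V g / n k - β) 0 ∂convPow μ (n k) :=
        integral_mono hint hint.pos_part fun g => le_max_left _ _

lemma L1rest_slowSubspace_le (hσ : IsBoundedCocycle μ C logGrowth)
    (hn : Summable fun k => (n k : ℝ)⁻¹) (hn_top : Tendsto n atTop atTop)
    (hV : slowSubspace hσ hn β ≠ ⊥) : L1rest μ (slowSubspace hσ hn β) ≤ β := by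
  set V := slowSubspace hσ hn β
  have hinv : ∀ᵐ g ∂μ, ∀ v ∈ V, g • v ∈ V := by
    filter_upwards [ae_map_slowSubspace_eq hσ hn (β := β)] with g hg v hv
      using hg.le (Submodule.mem_map_of_mem hv)
  let b := Module.finBasis ℝ V
  obtain ⟨c, hc, hle⟩ := exists_logNormOn_le b hV
  exact L1rest_le_of_summable hσ hV hinv hn_top
    (hσ.summable_integral_max hc hle hn fun i => (b i).2 _)

omit [IsProbabilityMeasure μ] in
lemma QuasiIrreducible.L1_le_L1rest (hqi : QuasiIrreducible μ) {V : Submodule ℝ (Ed d)}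
    (hV : V ≠ ⊥) (hinv : ∀ᵐ g ∂μ, V.map (glCLM g).toLinearMap = V) : L1 μ ≤ L1rest μ V := by
  rcases eq_or_ne V ⊤ with rfl | htop
  · exact (L1rest_top μ).ge
  · exact not_lt.mp fun hlt => hqi ⟨V, hV, htop, hinv, hlt⟩

variable [NeZero d]

lemma QuasiIrreducible.L1_le_minGrowthRate (hqi : QuasiIrreducible μ)
    (hσ : IsBoundedCocycle μ C logGrowth) : L1 μ ≤ minGrowthRate μ logGrowth := by
  obtain ⟨n, hpow, x, hx⟩ := hσ.exists_summable_meanExcess continuous_logGrowth_right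
  have hn : Summable fun k => (n k : ℝ)⁻¹ := by
    refine .of_nonneg_of_le (fun k => by positivity) (fun k => ?_) summable_geometric_two
    rw [one_div, inv_pow]
    gcongr
    exact_mod_cast hpow k
  have hn_top : Tendsto n atTop atTop :=
    tendsto_atTop_mono hpow (tendsto_pow_atTop_atTop_of_one_lt one_lt_two)
  have hV := slowSubspace_ne_bot hσ hn hx
  exact (hqi.L1_le_L1rest hV (ae_map_slowSubspace_eq hσ hn)).trans
    (L1rest_slowSubspace_le hσ hn hn_top hV)

end SlowSubspace

section UniformConvergence

variable {μ : Measure (GLd d)} [IsProbabilityMeasure μ] {C : ℝ}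

lemma tendsto_integral_log_gnorm_div [NeZero d] (hσ : IsBoundedCocycle μ C logGrowth) :
    Tendsto (fun n : ℕ => (∫ g, Real.log (gnorm g) ∂convPow μ n) / n) atTop (nhds (L1 μ)) := by
  simpa only [logNormOn_top, L1rest_top] using
    tendsto_L1rest (V := ⊤) hσ top_ne_bot (.of_forall fun _ _ _ => Submodule.mem_top)

lemma expectedGrowth_le_integral_log_gnorm [NeZero d] (hσ : IsBoundedCocycle μ C logGrowth)
    (n : ℕ) (x : Pd d) :
    expectedGrowth μ logGrowth n x ≤ ∫ g, Real.log (gnorm g) ∂convPow μ n := by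
  have hint : Integrable (fun g => Real.log (gnorm g)) (convPow μ n) := by
    simpa only [← logNormOn_top] using integrable_logNormOn (hσ.convPow n) top_ne_bot
  exact integral_mono ((hσ.convPow n).integrable x) hint fun g => logGrowth_le_log_gnorm g x

lemma QuasiIrreducible.tendsto_minGrowth_div [NeZero d] (hqi : QuasiIrreducible μ)
    (hσ : IsBoundedCocycle μ C logGrowth) :
    Tendsto (fun n : ℕ => minGrowth μ logGrowth n / n) atTop (nhds (L1 μ)) := by
  obtain ⟨x⟩ := (inferInstance : Nonempty (Pd d))
  have hle : minGrowthRate μ logGrowth ≤ L1 μ :=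
    le_of_tendsto_of_tendsto' hσ.tendsto_minGrowth_div (tendsto_integral_log_gnorm_div hσ)
      fun n => div_le_div_of_nonneg_right ((hσ.minGrowth_le n x).trans
        (expectedGrowth_le_integral_log_gnorm hσ n x)) n.cast_nonneg
  exact hle.antisymm (hqi.L1_le_minGrowthRate hσ) ▸ hσ.tendsto_minGrowth_div

omit [IsProbabilityMeasure μ] in
lemma exists_isBoundedCocycle_logGrowth [NeZero d] {S : Set (GLd d)} (hS : IsCompact S)
    (hμS : μ Sᶜ = 0) : ∃ C, IsBoundedCocycle μ C logGrowth := by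
  obtain ⟨C, hC⟩ := exists_abs_logGrowth_le hS
  exact ⟨C, isBoundedCocycle_logGrowth
    ((show ∀ᵐ g ∂μ, g ∈ S from hμS).mono fun g hg => hC g hg)⟩

lemma integral_log_norm_eq_expectedGrowth (n : ℕ) {v : Ed d} (hv : ‖v‖ = 1) :
    ∫ g, Real.log ‖glCLM g v‖ ∂mconvN μ n = expectedGrowth μ logGrowth n
      (Projectivization.mk ℝ v (norm_ne_zero_iff.mp (hv ▸ one_ne_zero))) := by
  simp only [mconvN_eq_convPow, expectedGrowth, logGrowth_mk, hv, Real.log_one, sub_zero]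
  rfl

end UniformConvergence

theorem uniform_convergence_to_L1_general
    (d : ℕ) [NeZero d] (S : Set (GLd d)) (hS : IsCompact S)
    (μ₀ : Measure (GLd d)) [IsProbabilityMeasure μ₀] (hμ₀S : μ₀ Sᶜ = 0)
    (hqi : QuasiIrreducible μ₀) :
    Tendsto (fun n : ℕ => sSup { x : ℝ | ∃ v : Ed d, ‖v‖ = 1 ∧
        x = |(n : ℝ)⁻¹ * (∫ g, Real.log ‖glCLM g v‖ ∂(mconvN μ₀ n)) - L1 μ₀| })
      atTop (nhds 0) := by
  obtain ⟨C, hσ⟩ := exists_isBoundedCocycle_logGrowth hS hμ₀S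
  have hbound : Tendsto (fun n : ℕ => max |minGrowth μ₀ logGrowth n / n - L1 μ₀|
      |(∫ g, Real.log (gnorm g) ∂convPow μ₀ n) / n - L1 μ₀|) atTop (nhds 0) := by
    simpa using ((hqi.tendsto_minGrowth_div hσ).sub_const (L1 μ₀)).abs.max
      ((tendsto_integral_log_gnorm_div hσ).sub_const (L1 μ₀)).abs
  refine squeeze_zero (fun n => Real.sSup_nonneg ?_) (fun n => Real.sSup_le ?_ ?_) hbound
  · rintro _ ⟨v, -, rfl⟩
    exact abs_nonneg _
  · rintro _ ⟨v, hv, rfl⟩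
    rw [integral_log_norm_eq_expectedGrowth n hv, ← div_eq_inv_mul]
    refine abs_le_max_abs_abs ?_ ?_ <;> gcongr
    exacts [hσ.minGrowth_le n _, expectedGrowth_le_integral_log_gnorm hσ n _]
  · exact le_max_of_le_left (abs_nonneg _)

theorem uniform_convergence_to_L1
    (d : ℕ) (hd : 2 ≤ d) (S : Set (GLd d)) (hS : IsCompact S)
    (μ₀ : Measure (GLd d)) [IsProbabilityMeasure μ₀] (hμ₀S : μ₀ Sᶜ = 0)
    (hqi : QuasiIrreducible μ₀) (hgap : L2 μ₀ < L1 μ₀) :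
    Tendsto (fun n : ℕ => sSup { x : ℝ | ∃ v : Ed d, ‖v‖ = 1 ∧
        x = |(n : ℝ)⁻¹ * (∫ g, Real.log ‖glCLM g v‖ ∂(mconvN μ₀ n)) - L1 μ₀| })
      atTop (nhds 0) :=
  have : NeZero d := ⟨by lia⟩
  uniform_convergence_to_L1_general d S hS μ₀ hμ₀S hqi

end
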